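/- arXiv:1905.13310 — 7 statements merged into one kernel-verified Lean document; each statement's English description precedes it below -/
import Mathlib

section
/- Let k be a field, Λ a Δ-indexing set, and M = (M_n, d_i^α) a Λ-system over k. Then there exists a λ-subcomplex of M that is maximal with respect to the componentwise-inclusion partial order on λ-subcomplexes. -/
/-!
Every condition defining a λ-subcomplex is linear: it says that each `A n` lies in the equalizer
of two linear maps, or that `A (n + 1)` lies in the preimage of `A n` under a linear map. These
conditions pass to arbitrary sums of families of subspaces, so the sum of all λ-subcomplexes is
again a λ-subcomplex. It is the greatest one, and in particular it is maximal.
-/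

open scoped TensorProduct
open MulOpposite

/-- A λ-subcomplex of the `Λ`-system `(M, d)`: a family of subspaces `A n ⊆ M n` such that
(i) all face maps `d n i α` for `α ∈ Λ n i` agree on `A (n+1)`;
(ii) the common restriction maps `A (n+1)` into `A n`;
(iii) the common restrictions satisfy the pre-simplicial identities
`d_i d_j = d_{j-1} d_i` for `i < j`.
Here, for each `n : ℕ`, the face maps go `M (n+1) → M n` and are indexed by
`i : Fin (n+2)` (i.e. `0 ≤ i ≤ n+1`), matching the convention that in degree `m ≥ 1`
there are face maps `d_0, …, d_m : M_m → M_{m-1}` indexed by `Λ_m^i`. -/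
def IsLambdaSubcomplex
    (k : Type*) [Field k] (M : ℕ → Type*) [∀ n, AddCommGroup (M n)] [∀ n, Module k (M n)]
    (Λ : (n : ℕ) → Fin (n + 2) → Type*)
    (d : ∀ (n : ℕ) (i : Fin (n + 2)), Λ n i → (M (n + 1) →ₗ[k] M n))
    (A : ∀ n, Submodule k (M n)) : Prop :=
  (∀ (n : ℕ) (i : Fin (n + 2)) (α β : Λ n i), ∀ x ∈ A (n + 1), d n i α x = d n i β x) ∧
  (∀ (n : ℕ) (i : Fin (n + 2)) (α : Λ n i), ∀ x ∈ A (n + 1), d n i α x ∈ A n) ∧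
  (∀ (n : ℕ) (i : Fin (n + 2)) (j : Fin (n + 3)), (i : ℕ) < (j : ℕ) →
    ∀ (α : Λ (n + 1) j) (β : Λ n i) (α' : Λ (n + 1) (Fin.castSucc i))
      (β' : Λ n ⟨(j : ℕ) - 1, by have := j.isLt; omega⟩),
      ∀ x ∈ A (n + 2),
        d n i β (d (n + 1) j α x)
          = d n ⟨(j : ℕ) - 1, by have := j.isLt; omega⟩ β' (d (n + 1) (Fin.castSucc i) α' x))

/-- `T` is a maximal λ-subcomplex of the `Λ`-system `(M, d)` with respect to the
componentwise-inclusion partial order on λ-subcomplexes. -/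
def IsMaximalLambdaSubcomplex
    (k : Type*) [Field k] (M : ℕ → Type*) [∀ n, AddCommGroup (M n)] [∀ n, Module k (M n)]
    (Λ : (n : ℕ) → Fin (n + 2) → Type*)
    (d : ∀ (n : ℕ) (i : Fin (n + 2)), Λ n i → (M (n + 1) →ₗ[k] M n))
    (T : ∀ n, Submodule k (M n)) : Prop :=
  IsLambdaSubcomplex k M Λ d T ∧
    ∀ A : ∀ n, Submodule k (M n), IsLambdaSubcomplex k M Λ d A →
      (∀ n, T n ≤ A n) → ∀ n, A n = T n

/-- Every Λ-system over a field `k` (with a Δ-indexing set `Λ`,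
i.e. all index sets `Λ n i` finite) has a maximal λ-subcomplex. -/
theorem exists_maximal_lambdaSubcomplex
    (k : Type*) [Field k] (M : ℕ → Type*) [∀ n, AddCommGroup (M n)] [∀ n, Module k (M n)]
    (Λ : (n : ℕ) → Fin (n + 2) → Type*) [∀ n i, Finite (Λ n i)]
    (d : ∀ (n : ℕ) (i : Fin (n + 2)), Λ n i → (M (n + 1) →ₗ[k] M n)) :
    ∃ T : ∀ n, Submodule k (M n), IsMaximalLambdaSubcomplex k M Λ d T := by
  -- The componentwise sum of all λ-subcomplexes.
  let T : ∀ n, Submodule k (M n) :=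
    fun n => ⨆ A : {A : ∀ n, Submodule k (M n) // IsLambdaSubcomplex k M Λ d A}, A.1 n
  have le_T : ∀ A, IsLambdaSubcomplex k M Λ d A → ∀ n, A n ≤ T n := fun A hA n =>
    le_iSup (fun A : {A : ∀ n, Submodule k (M n) // IsLambdaSubcomplex k M Λ d A} => A.1 n)
      ⟨A, hA⟩
  refine ⟨T, ⟨fun n i α β => ?_, fun n i α => ?_, fun n i j hij α β α' β' => ?_⟩,
    fun A hA hTA n => le_antisymm (le_T A hA n) (hTA n)⟩
  · have h : T (n + 1) ≤ LinearMap.eqLocus (d n i α) (d n i β) :=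
      iSup_le fun A x hx => A.2.1 n i α β x hx
    exact fun x hx => h hx
  · have h : T (n + 1) ≤ (T n).comap (d n i α) :=
      iSup_le fun A x hx => le_T A.1 A.2 n (A.2.2.1 n i α x hx)
    exact fun x hx => h hx
  · have h : T (n + 2) ≤ LinearMap.eqLocus (d n i β ∘ₗ d (n + 1) j α)
        (d n _ β' ∘ₗ d (n + 1) (Fin.castSucc i) α') :=
      iSup_le fun A x hx => A.2.2.2 n i j hij α β α' β' x hx
    exact fun x hx => h hx
end

section
/- Let k be a field, Λ a Δ-indexing set, and M = (M_n, d_i^α) a Λ-system over k. If C and D are both maximal λ-subcomplexes of M (with respect to componentwise inclusion), then C_n = D_n for every n; i.e., the maximal λ-subcomplex of M is unique. -/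
/-!
λ-subcomplexes are closed under componentwise sums: on `A n ⊔ B n` every defining condition is an
identity between (or a membership for) linear maps, hence follows from the same condition on the
two summands (`IsLambdaSubcomplex.sup`). If `C` and `D` are both maximal, then `C ⊔ D` is a
λ-subcomplex containing each of them, so it equals each of them.
-/

open scoped TensorProduct
open MulOpposite

theorem IsLambdaSubcomplex.sup
    {k : Type*} [Field k] {M : ℕ → Type*} [∀ n, AddCommGroup (M n)] [∀ n, Module k (M n)]
    {Λ : (n : ℕ) → Fin (n + 2) → Type*}
    {d : ∀ (n : ℕ) (i : Fin (n + 2)), Λ n i → (M (n + 1) →ₗ[k] M n)}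
    {A B : ∀ n, Submodule k (M n)}
    (hA : IsLambdaSubcomplex k M Λ d A) (hB : IsLambdaSubcomplex k M Λ d B) :
    IsLambdaSubcomplex k M Λ d (fun n => A n ⊔ B n) := by
  obtain ⟨hA1, hA2, hA3⟩ := hA
  obtain ⟨hB1, hB2, hB3⟩ := hB
  refine ⟨?_, ?_, ?_⟩
  · intro n i α β x hx
    obtain ⟨a, ha, b, hb, rfl⟩ := Submodule.mem_sup.1 hx
    rw [map_add, map_add, hA1 n i α β a ha, hB1 n i α β b hb]
  · intro n i α x hx
    obtain ⟨a, ha, b, hb, rfl⟩ := Submodule.mem_sup.1 hx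
    rw [map_add]
    exact Submodule.add_mem_sup (hA2 n i α a ha) (hB2 n i α b hb)
  · intro n i j hij α β α' β' x hx
    obtain ⟨a, ha, b, hb, rfl⟩ := Submodule.mem_sup.1 hx
    simp only [map_add]
    rw [hA3 n i j hij α β α' β' a ha, hB3 n i j hij α β α' β' b hb]

/-- The maximal λ-subcomplex of a Λ-system is unique: if `C` and `D` are
both maximal λ-subcomplexes (w.r.t. componentwise inclusion), then `C n = D n` for all `n`. -/
theorem maximal_lambdaSubcomplex_unique
    (k : Type*) [Field k] (M : ℕ → Type*) [∀ n, AddCommGroup (M n)] [∀ n, Module k (M n)]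
    (Λ : (n : ℕ) → Fin (n + 2) → Type*) [∀ n i, Finite (Λ n i)]
    (d : ∀ (n : ℕ) (i : Fin (n + 2)), Λ n i → (M (n + 1) →ₗ[k] M n))
    (C D : ∀ n, Submodule k (M n))
    (hC : IsMaximalLambdaSubcomplex k M Λ d C)
    (hD : IsMaximalLambdaSubcomplex k M Λ d D) :
    ∀ n, C n = D n := by
  intro n
  have hsup := hC.1.sup hD.1
  exact (hC.2 _ hsup (fun _ => le_sup_left) n).symm.trans
    (hD.2 _ hsup (fun _ => le_sup_right) n)
end

section
/- Let k be a field, Λ a Δ-indexing set, M = (M_n, d_i^α) a Λ-system over k, and let Θ(M) denote its unique maximal λ-subcomplex. Then every λ-subcomplex A of M satisfies A_n ⊆ Θ(M)_n for all n; i.e., Θ(M) is the greatest element of the poset of λ-subcomplexes. -/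
/-!
The conditions defining a λ-subcomplex are closed under sums: agreement of face maps and the
pre-simplicial identities are equalities of linear maps, so they pass from `A` and `B` to `A ⊔ B`,
and so does stability under each face map. Hence `A ⊔ Θ` is a λ-subcomplex containing `Θ`;
maximality of `Θ` gives `A ⊔ Θ = Θ`, that is `A ≤ Θ`.
-/

open scoped TensorProduct
open MulOpposite

/-- The (unique) maximal λ-subcomplex `Θ` of a Λ-system is the greatest
element of the poset of λ-subcomplexes: every λ-subcomplex `A` satisfies `A n ⊆ Θ n`. -/
theorem lambdaSubcomplex_le_maximal
    (k : Type*) [Field k] (M : ℕ → Type*) [∀ n, AddCommGroup (M n)] [∀ n, Module k (M n)]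
    (Λ : (n : ℕ) → Fin (n + 2) → Type*) [∀ n i, Finite (Λ n i)]
    (d : ∀ (n : ℕ) (i : Fin (n + 2)), Λ n i → (M (n + 1) →ₗ[k] M n))
    (Θ : ∀ n, Submodule k (M n))
    (hΘ : IsMaximalLambdaSubcomplex k M Λ d Θ)
    (A : ∀ n, Submodule k (M n)) (hA : IsLambdaSubcomplex k M Λ d A) :
    ∀ n, A n ≤ Θ n := by
  intro n
  have h := hΘ.2 _ (hA.sup hΘ.1) (fun m => le_sup_right) n
  exact sup_eq_right.mp h
end

section
/- Let k be a field, Λ a Δ-indexing set, and M = (M_n, d_i^α) a Λ-system over k. If C and D are λ-subcomplexes of M, then the componentwise sum Y, defined by Y_n = C_n + D_n = {c + d : c ∈ C_n, d ∈ D_n} ⊆ M_n, is again a λ-subcomplex of M. -/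
open scoped TensorProduct
open MulOpposite

/-- The componentwise sum `Y n = C n + D n = {c + d | c ∈ C n, d ∈ D n}`
(the join of submodules) of two λ-subcomplexes is again a λ-subcomplex. -/
theorem sum_lambdaSubcomplex
    (k : Type*) [Field k] (M : ℕ → Type*) [∀ n, AddCommGroup (M n)] [∀ n, Module k (M n)]
    (Λ : (n : ℕ) → Fin (n + 2) → Type*) [∀ n i, Finite (Λ n i)]
    (d : ∀ (n : ℕ) (i : Fin (n + 2)), Λ n i → (M (n + 1) →ₗ[k] M n))
    (C D : ∀ n, Submodule k (M n))
    (hC : IsLambdaSubcomplex k M Λ d C) (hD : IsLambdaSubcomplex k M Λ d D) :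
    IsLambdaSubcomplex k M Λ d (fun n => C n ⊔ D n) := by
  obtain ⟨hC₁, hC₂, hC₃⟩ := hC
  obtain ⟨hD₁, hD₂, hD₃⟩ := hD
  refine ⟨fun n i α β x hx => ?_, fun n i α x hx => ?_, fun n i j hij α β α' β' x hx => ?_⟩ <;>
    obtain ⟨c, hc, e, he, rfl⟩ := Submodule.mem_sup.1 hx
  · rw [map_add, map_add, hC₁ n i α β c hc, hD₁ n i α β e he]
  · rw [map_add]
    exact Submodule.add_mem_sup (hC₂ n i α c hc) (hD₂ n i α e he)
  · simp only [map_add]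
    rw [hC₃ n i j hij α β α' β' c hc, hD₃ n i j hij α β α' β' e he]
end

section
/- Let k be a field, Γ and Λ two Δ-indexing sets, M = (M_n, d_i^β) a Γ-system and N = (N_n, δ_i^α) a Λ-system over k, and f : M → N a λ-morphism. Let Θ(M) be the unique maximal λ-subcomplex of M. Then the family of images A = (A_n) with A_n = f_n(Θ(M)_n) ⊆ N_n is a λ-subcomplex of N. -/
/-!
Each face map `δ n i α` of `N`, applied to `f (n + 1) x`, equals `f n (d n i β x)` for some
`β : Γ n i`. For `x` in a λ-subcomplex of `M`, the value `d n i β x` does not depend on `β`, so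
the agreement of faces, the stability under faces and the pre-simplicial identities all pass
to the image by applying `f`.
-/

open scoped TensorProduct
open MulOpposite

/-- A λ-morphism from the `Γ`-system `(M, d)` to the `Λ`-system `(N, δ)`: a family of
`k`-linear maps `f n : M n → N n` such that for every `n`, `i`, and `α ∈ Λ n i` there
exists `β ∈ Γ n i` with `δ_i^α ∘ f_{n+1} = f_n ∘ d_i^β`. -/
def IsLambdaMorphism
    (k : Type*) [Field k]
    (M : ℕ → Type*) [∀ n, AddCommGroup (M n)] [∀ n, Module k (M n)]
    (N : ℕ → Type*) [∀ n, AddCommGroup (N n)] [∀ n, Module k (N n)]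
    (Γ : (n : ℕ) → Fin (n + 2) → Type*) (Λ : (n : ℕ) → Fin (n + 2) → Type*)
    (d : ∀ (n : ℕ) (i : Fin (n + 2)), Γ n i → (M (n + 1) →ₗ[k] M n))
    (δ : ∀ (n : ℕ) (i : Fin (n + 2)), Λ n i → (N (n + 1) →ₗ[k] N n))
    (f : ∀ n, M n →ₗ[k] N n) : Prop :=
  ∀ (n : ℕ) (i : Fin (n + 2)) (α : Λ n i), ∃ β : Γ n i,
    ∀ x : M (n + 1), δ n i α (f (n + 1) x) = f n (d n i β x)

/-- If `f` is a λ-morphism from the `Γ`-system `(M, d)` to the `Λ`-system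
`(N, δ)` and `Θ` denotes the (unique) maximal λ-subcomplex of `(M, d)`, then the family of
images `A n = f n (Θ n)` is a λ-subcomplex of `(N, δ)`. -/
theorem image_of_maximal_lambdaSubcomplex_isLambdaSubcomplex
    (k : Type*) [Field k]
    (M : ℕ → Type*) [∀ n, AddCommGroup (M n)] [∀ n, Module k (M n)]
    (N : ℕ → Type*) [∀ n, AddCommGroup (N n)] [∀ n, Module k (N n)]
    (Γ : (n : ℕ) → Fin (n + 2) → Type*) (Λ : (n : ℕ) → Fin (n + 2) → Type*)
    [∀ n i, Finite (Γ n i)] [∀ n i, Finite (Λ n i)]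
    (d : ∀ (n : ℕ) (i : Fin (n + 2)), Γ n i → (M (n + 1) →ₗ[k] M n))
    (δ : ∀ (n : ℕ) (i : Fin (n + 2)), Λ n i → (N (n + 1) →ₗ[k] N n))
    (f : ∀ n, M n →ₗ[k] N n)
    (hf : IsLambdaMorphism k M N Γ Λ d δ f)
    (ΘM : ∀ n, Submodule k (M n)) (hΘM : IsMaximalLambdaSubcomplex k M Γ d ΘM) :
    IsLambdaSubcomplex k N Λ δ (fun n => (ΘM n).map (f n)) := by
  obtain ⟨⟨hagree, hmem, hsimp⟩, -⟩ := hΘM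
  refine ⟨?_, ?_, ?_⟩
  · rintro n i α β _ ⟨x, hx, rfl⟩
    obtain ⟨a, ha⟩ := hf n i α
    obtain ⟨b, hb⟩ := hf n i β
    rw [ha, hb, hagree n i a b x hx]
  · rintro n i α _ ⟨x, hx, rfl⟩
    obtain ⟨a, ha⟩ := hf n i α
    rw [ha]
    exact Submodule.mem_map_of_mem (hmem n i a x hx)
  · rintro n i j hij α β α' β' _ ⟨x, hx, rfl⟩
    obtain ⟨a, ha⟩ := hf (n + 1) j α
    obtain ⟨b, hb⟩ := hf n i β
    obtain ⟨a', ha'⟩ := hf (n + 1) (Fin.castSucc i) α'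
    obtain ⟨b', hb'⟩ := hf n _ β'
    rw [ha, hb, ha', hb', hsimp n i j hij a b a' b' x hx]
end

section
/- Let k be a field, Γ and Λ two Δ-indexing sets, M = (M_n, d_i^β) a Γ-system and N = (N_n, δ_i^α) a Λ-system over k, and f : M → N a λ-morphism. Then f_n(Θ(M)_n) ⊆ Θ(N)_n for every n, where Θ(M) and Θ(N) denote the unique maximal λ-subcomplexes of M and N respectively. -/
/-! The image of `Θ(M)` under a λ-morphism is a λ-subcomplex of `N`
(`IsLambdaSubcomplex.map_morphism`), and since the face maps are linear, the sum of two
λ-subcomplexes is again one (`IsLambdaSubcomplex.sup`). Hence `Θ(N) + f(Θ(M))` is a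
λ-subcomplex containing `Θ(N)`, so it equals `Θ(N)` by maximality. -/

open scoped TensorProduct
open MulOpposite

/-- The image of a λ-subcomplex under a λ-morphism is a λ-subcomplex: each `δ n i α` pulls back
along `f` to some `d n i β`, so all three conditions transfer. -/
theorem IsLambdaSubcomplex.map_morphism
    {k : Type*} [Field k]
    {M : ℕ → Type*} [∀ n, AddCommGroup (M n)] [∀ n, Module k (M n)]
    {N : ℕ → Type*} [∀ n, AddCommGroup (N n)] [∀ n, Module k (N n)]
    {Γ : (n : ℕ) → Fin (n + 2) → Type*} {Λ : (n : ℕ) → Fin (n + 2) → Type*}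
    {d : ∀ (n : ℕ) (i : Fin (n + 2)), Γ n i → (M (n + 1) →ₗ[k] M n)}
    {δ : ∀ (n : ℕ) (i : Fin (n + 2)), Λ n i → (N (n + 1) →ₗ[k] N n)}
    {f : ∀ n, M n →ₗ[k] N n} (hf : IsLambdaMorphism k M N Γ Λ d δ f)
    {A : ∀ n, Submodule k (M n)} (hA : IsLambdaSubcomplex k M Γ d A) :
    IsLambdaSubcomplex k N Λ δ (fun n => (A n).map (f n)) := by
  obtain ⟨h1, h2, h3⟩ := hA
  refine ⟨?_, ?_, ?_⟩
  · rintro n i α α' _ ⟨x, hx, rfl⟩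
    obtain ⟨β, hβ⟩ := hf n i α
    obtain ⟨β', hβ'⟩ := hf n i α'
    rw [hβ, hβ', h1 n i β β' x hx]
  · rintro n i α _ ⟨x, hx, rfl⟩
    obtain ⟨β, hβ⟩ := hf n i α
    exact ⟨d n i β x, h2 n i β x hx, (hβ x).symm⟩
  · rintro n i j hij α β α' β' _ ⟨x, hx, rfl⟩
    obtain ⟨a, ha⟩ := hf _ _ α
    obtain ⟨b, hb⟩ := hf _ _ β
    obtain ⟨a', ha'⟩ := hf _ _ α'
    obtain ⟨b', hb'⟩ := hf _ _ β'
    rw [ha, hb, ha', hb', h3 n i j hij a b a' b' x hx]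

/-- If `f` is a λ-morphism from the `Γ`-system `(M, d)` to the `Λ`-system
`(N, δ)`, then `f n (Θ(M) n) ⊆ Θ(N) n` for every `n`, where `Θ(M)` and `Θ(N)` are the
unique maximal λ-subcomplexes of `(M, d)` and `(N, δ)` respectively. -/
theorem image_of_maximal_le_maximal
    (k : Type*) [Field k]
    (M : ℕ → Type*) [∀ n, AddCommGroup (M n)] [∀ n, Module k (M n)]
    (N : ℕ → Type*) [∀ n, AddCommGroup (N n)] [∀ n, Module k (N n)]
    (Γ : (n : ℕ) → Fin (n + 2) → Type*) (Λ : (n : ℕ) → Fin (n + 2) → Type*)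
    [∀ n i, Finite (Γ n i)] [∀ n i, Finite (Λ n i)]
    (d : ∀ (n : ℕ) (i : Fin (n + 2)), Γ n i → (M (n + 1) →ₗ[k] M n))
    (δ : ∀ (n : ℕ) (i : Fin (n + 2)), Λ n i → (N (n + 1) →ₗ[k] N n))
    (f : ∀ n, M n →ₗ[k] N n)
    (hf : IsLambdaMorphism k M N Γ Λ d δ f)
    (ΘM : ∀ n, Submodule k (M n)) (hΘM : IsMaximalLambdaSubcomplex k M Γ d ΘM)
    (ΘN : ∀ n, Submodule k (N n)) (hΘN : IsMaximalLambdaSubcomplex k N Λ δ ΘN) :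
    ∀ n, (ΘM n).map (f n) ≤ ΘN n := by
  intro n
  have h := hΘN.2 _ (hΘN.1.sup (hΘM.1.map_morphism hf)) (fun n => le_sup_left) n
  exact sup_eq_left.1 h
end

section
/- Let k be a field, Γ and Λ two Δ-indexing sets, M = (M_n, d_i^β) a Γ-system and N = (N_n, δ_i^α) a Λ-system over k, and f : M → N a λ-morphism. Let d_i^{Θ(M)} and δ_i^{Θ(N)} denote the common face maps of the maximal λ-subcomplexes Θ(M) and Θ(N). Then for every n ≥ 1, every 0 ≤ i ≤ n, and every x ∈ Θ(M)_n, one has f_n(x) ∈ Θ(N)_n and δ_i^{Θ(N)}(f_n(x)) = f_{n−1}(d_i^{Θ(M)}(x)); i.e., f restricts to a morphism of pre-simplicial k-modules Θ(M) → Θ(N). -/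
/-!
The image of a λ-subcomplex under a λ-morphism is a λ-subcomplex (`IsLambdaSubcomplex.map`): on a
λ-subcomplex all face maps of the source with a given index agree, so there `f` intertwines any
face map of the source with any face map of the target of the same index
(`IsLambdaMorphism.comm_of_mem`). Since sums of λ-subcomplexes are λ-subcomplexes, a maximal one
is the largest one (`IsMaximalLambdaSubcomplex.le`), so `Θ(N)` contains `f(Θ(M))`.
-/

open scoped TensorProduct
open MulOpposite

/-- A maximal λ-subcomplex contains every λ-subcomplex: it equals its sum with any other. -/
theorem IsMaximalLambdaSubcomplex.le
    {k : Type*} [Field k] {M : ℕ → Type*} [∀ n, AddCommGroup (M n)] [∀ n, Module k (M n)]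
    {Λ : (n : ℕ) → Fin (n + 2) → Type*}
    {d : ∀ (n : ℕ) (i : Fin (n + 2)), Λ n i → (M (n + 1) →ₗ[k] M n)}
    {T A : ∀ n, Submodule k (M n)}
    (hT : IsMaximalLambdaSubcomplex k M Λ d T) (hA : IsLambdaSubcomplex k M Λ d A) (n : ℕ) :
    A n ≤ T n :=
  le_sup_right.trans (hT.2 _ (hT.1.sup hA) (fun _ => le_sup_left) n).le

/-- On a λ-subcomplex of the source, a λ-morphism intertwines every pair of face maps with the
same index, not just the pairs provided by its definition. -/
theorem IsLambdaMorphism.comm_of_mem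
    {k : Type*} [Field k]
    {M : ℕ → Type*} [∀ n, AddCommGroup (M n)] [∀ n, Module k (M n)]
    {N : ℕ → Type*} [∀ n, AddCommGroup (N n)] [∀ n, Module k (N n)]
    {Γ : (n : ℕ) → Fin (n + 2) → Type*} {Λ : (n : ℕ) → Fin (n + 2) → Type*}
    {d : ∀ (n : ℕ) (i : Fin (n + 2)), Γ n i → (M (n + 1) →ₗ[k] M n)}
    {δ : ∀ (n : ℕ) (i : Fin (n + 2)), Λ n i → (N (n + 1) →ₗ[k] N n)}
    {f : ∀ n, M n →ₗ[k] N n} (hf : IsLambdaMorphism k M N Γ Λ d δ f)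
    {A : ∀ n, Submodule k (M n)} (hA : IsLambdaSubcomplex k M Γ d A)
    (n : ℕ) (i : Fin (n + 2)) (α : Λ n i) (β : Γ n i) (x : M (n + 1)) (hx : x ∈ A (n + 1)) :
    δ n i α (f (n + 1) x) = f n (d n i β x) := by
  obtain ⟨γ, hγ⟩ := hf n i α
  rw [hγ, hA.1 n i γ β x hx]

theorem IsLambdaSubcomplex.map
    {k : Type*} [Field k]
    {M : ℕ → Type*} [∀ n, AddCommGroup (M n)] [∀ n, Module k (M n)]
    {N : ℕ → Type*} [∀ n, AddCommGroup (N n)] [∀ n, Module k (N n)]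
    {Γ : (n : ℕ) → Fin (n + 2) → Type*} {Λ : (n : ℕ) → Fin (n + 2) → Type*}
    {d : ∀ (n : ℕ) (i : Fin (n + 2)), Γ n i → (M (n + 1) →ₗ[k] M n)}
    {δ : ∀ (n : ℕ) (i : Fin (n + 2)), Λ n i → (N (n + 1) →ₗ[k] N n)}
    {f : ∀ n, M n →ₗ[k] N n} {A : ∀ n, Submodule k (M n)}
    (hA : IsLambdaSubcomplex k M Γ d A) (hf : IsLambdaMorphism k M N Γ Λ d δ f) :
    IsLambdaSubcomplex k N Λ δ (fun n => (A n).map (f n)) := by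
  have hcomm := hf.comm_of_mem hA
  obtain ⟨-, hA₂, hA₃⟩ := hA
  refine ⟨fun n i α β x hx => ?_, fun n i α x hx => ?_, fun n i j hij α β α' β' x hx => ?_⟩
  all_goals obtain ⟨a, ha, rfl⟩ := Submodule.mem_map.1 hx
  · obtain ⟨γ, -⟩ := hf n i α
    rw [hcomm n i α γ a ha, hcomm n i β γ a ha]
  · obtain ⟨γ, -⟩ := hf n i α
    rw [hcomm n i α γ a ha]
    exact Submodule.mem_map_of_mem (hA₂ n i γ a ha)
  -- Transport each of the four face maps to the source, where the identity is known.
  · obtain ⟨γ₁, -⟩ := hf _ _ α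
    obtain ⟨γ₂, -⟩ := hf _ _ β
    obtain ⟨γ₃, -⟩ := hf _ _ α'
    obtain ⟨γ₄, -⟩ := hf _ _ β'
    rw [hcomm _ _ α γ₁ a ha, hcomm _ _ β γ₂ _ (hA₂ _ _ γ₁ a ha),
      hcomm _ _ α' γ₃ a ha, hcomm _ _ β' γ₄ _ (hA₂ _ _ γ₃ a ha),
      hA₃ n i j hij γ₁ γ₂ γ₃ γ₄ a ha]

/-- A λ-morphism `f` between a `Γ`-system `(M, d)` and a `Λ`-system
`(N, δ)` restricts to a morphism of pre-simplicial `k`-modules `Θ(M) → Θ(N)`: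
for every `x ∈ Θ(M) n` one has `f n x ∈ Θ(N) n`, and `f` intertwines the common face
maps of `Θ(M)` and `Θ(N)` (the common face maps being the restrictions of *any*
`d n i β`, resp. `δ n i α`, since on the maximal λ-subcomplexes all choices agree). -/
theorem lambdaMorphism_restricts_to_presimplicial_morphism
    (k : Type*) [Field k]
    (M : ℕ → Type*) [∀ n, AddCommGroup (M n)] [∀ n, Module k (M n)]
    (N : ℕ → Type*) [∀ n, AddCommGroup (N n)] [∀ n, Module k (N n)]
    (Γ : (n : ℕ) → Fin (n + 2) → Type*) (Λ : (n : ℕ) → Fin (n + 2) → Type*)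
    [∀ n i, Finite (Γ n i)] [∀ n i, Finite (Λ n i)]
    (d : ∀ (n : ℕ) (i : Fin (n + 2)), Γ n i → (M (n + 1) →ₗ[k] M n))
    (δ : ∀ (n : ℕ) (i : Fin (n + 2)), Λ n i → (N (n + 1) →ₗ[k] N n))
    (f : ∀ n, M n →ₗ[k] N n)
    (hf : IsLambdaMorphism k M N Γ Λ d δ f)
    (ΘM : ∀ n, Submodule k (M n)) (hΘM : IsMaximalLambdaSubcomplex k M Γ d ΘM)
    (ΘN : ∀ n, Submodule k (N n)) (hΘN : IsMaximalLambdaSubcomplex k N Λ δ ΘN) :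
    (∀ n, ∀ x ∈ ΘM n, f n x ∈ ΘN n) ∧
      (∀ (n : ℕ) (i : Fin (n + 2)) (α : Λ n i) (β : Γ n i), ∀ x ∈ ΘM (n + 1),
        δ n i α (f (n + 1) x) = f n (d n i β x)) := by
  exact ⟨fun n x hx => hΘN.le (hΘM.1.map hf) n (Submodule.mem_map_of_mem hx),
    hf.comm_of_mem hΘM.1⟩
end
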